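/- Let a, b, s, t be nonnegative integers. Then, as maps defined on Λ^a⊗Λ^b: if s+t ≤ b, then δ_s∘δ_t = C(s+t,t)·δ_{s+t} (where the second δ_s is the map Λ^{a+t}⊗Λ^{b−t} → Λ^{a+t+s}⊗Λ^{b−t−s}); and if s+t ≤ a, then θ_s∘θ_t = C(s+t,t)·θ_{s+t} (where the second θ_s is the map Λ^{a−t}⊗Λ^{b+t} → Λ^{a−t−s}⊗Λ^{b+t+s}). -/

import Mathlib

open TensorProduct

set_option synthInstance.maxHeartbeats 1000000
set_option maxSynthPendingDepth 3
set_option maxHeartbeats 1000000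

noncomputable section

namespace MMS

variable (K : Type) [Field K] [CharZero K] (n : ℕ)

/-- `V = K^n`, the natural module of `G = GL(n,K)`. -/
abbrev V : Type := Fin n → K

/-- `Λ^p`, the `p`-th exterior power of `V`. -/
abbrev Lam (p : ℕ) : Type := ⋀[K]^p (V K n)

/-- The wedge `v_1 ∧ ⋯ ∧ v_p ∈ Λ^p`. -/
def wedge {p : ℕ} (v : Fin p → V K n) : Lam K n p :=
  ⟨ExteriorAlgebra.ιMulti K p v, ExteriorAlgebra.ιMulti_range K p (Set.mem_range_self v)⟩

/-- Transport along an equality of degrees. -/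
def ecast {p q : ℕ} (h : p = q) : Lam K n p ≃ₗ[K] Lam K n q :=
  h ▸ LinearEquiv.refl K (Lam K n p)

/-- `m` is the wedge multiplication map `Λ^p ⊗ Λ^q → Λ^{p+q}`. -/
def IsMulMap (p q : ℕ) (m : Lam K n p ⊗[K] Lam K n q →ₗ[K] Lam K n (p+q)) : Prop :=
  ∀ (v : Fin p → V K n) (w : Fin q → V K n),
    m (wedge K n v ⊗ₜ[K] wedge K n w) = wedge K n (Fin.append v w)

/-- The set of `(p,q)`-shuffles: permutations `σ` of `{1, …, p+q}` which are strictly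
increasing on the first `p` and on the last `q` indices. -/
def shuffles (p q : ℕ) : Finset (Equiv.Perm (Fin (p+q))) :=
  Finset.univ.filter (fun σ =>
    (∀ i j : Fin (p+q), i < j → (j : ℕ) < p → σ i < σ j) ∧
    (∀ i j : Fin (p+q), i < j → p ≤ (i : ℕ) → σ i < σ j))

/-- `D` is the component `Δ_{p,q} : Λ^{p+q} → Λ^p ⊗ Λ^q` of the comultiplication, i.e.
`Δ_{p,q}(v_1 ∧ ⋯ ∧ v_{p+q}) = Σ_σ sgn(σ) (v_{σ(1)} ∧ ⋯ ∧ v_{σ(p)}) ⊗ (v_{σ(p+1)} ∧ ⋯ ∧ v_{σ(p+q)})`,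
the sum being over all `(p,q)`-shuffles. -/
def IsComulMap (p q : ℕ) (D : Lam K n (p+q) →ₗ[K] Lam K n p ⊗[K] Lam K n q) : Prop :=
  ∀ v : Fin (p+q) → V K n,
    D (wedge K n v) =
      ∑ σ ∈ shuffles p q,
        (Equiv.Perm.sign σ : ℤ) •
          (wedge K n (fun i => v (σ (Fin.castAdd q i))) ⊗ₜ[K]
            wedge K n (fun i => v (σ (Fin.natAdd p i))))

variable (mf : ∀ p q : ℕ, Lam K n p ⊗[K] Lam K n q →ₗ[K] Lam K n (p+q))
variable (Df : ∀ p q : ℕ, Lam K n (p+q) →ₗ[K] Lam K n p ⊗[K] Lam K n q)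

/-- The map `δ_t = (m ⊗ 1) ∘ (1 ⊗ Δ_{t,b-t}) : Λ^a ⊗ Λ^b → Λ^{a+t} ⊗ Λ^{b-t}`. -/
def deltaMap (a b t : ℕ) (ht : t ≤ b) :
    Lam K n a ⊗[K] Lam K n b →ₗ[K] Lam K n (a+t) ⊗[K] Lam K n (b-t) :=
  (TensorProduct.map (mf a t) LinearMap.id)
    ∘ₗ (TensorProduct.assoc K (Lam K n a) (Lam K n t) (Lam K n (b-t))).symm.toLinearMap
    ∘ₗ (TensorProduct.map LinearMap.id
        ((Df t (b-t)) ∘ₗ (ecast K n (by omega : b = t + (b-t))).toLinearMap))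

/-- The map `θ_t = (1 ⊗ m) ∘ (Δ_{a-t,t} ⊗ 1) : Λ^a ⊗ Λ^b → Λ^{a-t} ⊗ Λ^{b+t}`. -/
def thetaMap (a b t : ℕ) (ht : t ≤ a) :
    Lam K n a ⊗[K] Lam K n b →ₗ[K] Lam K n (a-t) ⊗[K] Lam K n (b+t) :=
  (TensorProduct.map LinearMap.id
      ((ecast K n (by omega : t + b = b + t)).toLinearMap ∘ₗ mf t b))
    ∘ₗ (TensorProduct.assoc K (Lam K n (a-t)) (Lam K n t) (Lam K n b)).toLinearMap
    ∘ₗ (TensorProduct.map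
        ((Df (a-t) t) ∘ₗ (ecast K n (by omega : a = (a-t) + t)).toLinearMap) LinearMap.id)

/-- The map `Φ_t = θ_t ∘ δ_t : Λ^a ⊗ Λ^b → Λ^a ⊗ Λ^b`. -/
def PhiMap (a b t : ℕ) (hta : t ≤ a) (htb : t ≤ b) :
    Lam K n a ⊗[K] Lam K n b →ₗ[K] Lam K n a ⊗[K] Lam K n b :=
  (TensorProduct.congr (ecast K n (by omega : a + t - t = a))
      (ecast K n (by omega : b - t + t = b))).toLinearMap
    ∘ₗ thetaMap K n mf Df (a+t) (b-t) t (by omega)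
    ∘ₗ deltaMap K n mf Df a b t htb

/-- The map `Φ_t`, extended by `0` to all `t`. -/
def PhiMap' (a b t : ℕ) :
    Lam K n a ⊗[K] Lam K n b →ₗ[K] Lam K n a ⊗[K] Lam K n b :=
  if h : t ≤ a ∧ t ≤ b then PhiMap K n mf Df a b t h.1 h.2 else 0

/-- The map `θ_1 : Λ^{a+1} ⊗ Λ^{b-1} → Λ^a ⊗ Λ^b` (for `b ≥ 1`). -/
def theta1 (a b : ℕ) (hb : 1 ≤ b) :
    Lam K n (a+1) ⊗[K] Lam K n (b-1) →ₗ[K] Lam K n a ⊗[K] Lam K n b :=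
  (TensorProduct.congr (ecast K n (by omega : a + 1 - 1 = a))
      (ecast K n (by omega : b - 1 + 1 = b))).toLinearMap
    ∘ₗ thetaMap K n mf Df (a+1) (b-1) 1 (by omega)

/-- The submodule of relations defining the Schur module `L_{(a,b)}`: the image of
`θ_1` if `b ≥ 1`, and `0` if `b = 0`. -/
def schurRel (a b : ℕ) : Submodule K (Lam K n a ⊗[K] Lam K n b) :=
  if hb : 1 ≤ b then LinearMap.range (theta1 K n mf Df a b hb) else ⊥

/-- The Schur module `L_{(a,b)}`, realized as the cokernel of `θ_1` (in characteristic zero). -/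
abbrev SchurL (a b : ℕ) : Type :=
  (Lam K n a ⊗[K] Lam K n b) ⧸ schurRel K n mf Df a b

/-- The projection `π_{(a,b)} : Λ^a ⊗ Λ^b → L_{(a,b)}`. -/
def schurProj (a b : ℕ) : Lam K n a ⊗[K] Lam K n b →ₗ[K] SchurL K n mf Df a b :=
  (schurRel K n mf Df a b).mkQ

/-- The coefficient `c_t(a,b,i) = C(i,t)·C(a-b+t+i,t)`. -/
def cCoef (a b t i : ℕ) : ℕ := (i.choose t) * ((a-b+t+i).choose t)

/-- The group `G = GL(n,K)`. -/
abbrev GLn : Type := Matrix.GeneralLinearGroup (Fin n) K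

/-- `rho` is the family of natural actions of `G = GL(n,K)` on the exterior powers `Λ^p`
of the natural module `V = K^n`. -/
def IsExtAction (rho : ∀ p : ℕ, GLn K n → (Lam K n p →ₗ[K] Lam K n p)) : Prop :=
  ∀ (p : ℕ) (g : GLn K n) (v : Fin p → V K n),
    rho p g (wedge K n v) =
      wedge K n (fun i => Matrix.toLin' (g : Matrix (Fin n) (Fin n) K) (v i))

/-- The action of `g ∈ GL(n,K)` on `Λ^a ⊗ Λ^b`. -/
def rhoT (rho : ∀ p : ℕ, GLn K n → (Lam K n p →ₗ[K] Lam K n p)) (a b : ℕ) (g : GLn K n) :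
    Lam K n a ⊗[K] Lam K n b →ₗ[K] Lam K n a ⊗[K] Lam K n b :=
  TensorProduct.map (rho a g) (rho b g)

/-- The quotients `M₁ ⧸ N₁` and `M₂ ⧸ N₂` are isomorphic as representations, with respect
to the given actions `ρ₁, ρ₂` on `M₁` and `M₂` (which descend to the quotients). -/
def IsQuotIso {G' : Type} {M₁ M₂ : Type} [AddCommGroup M₁] [Module K M₁]
    [AddCommGroup M₂] [Module K M₂]
    (N₁ : Submodule K M₁) (N₂ : Submodule K M₂)
    (ρ₁ : G' → M₁ →ₗ[K] M₁) (ρ₂ : G' → M₂ →ₗ[K] M₂) : Prop :=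
  ∃ e : (M₁ ⧸ N₁) ≃ₗ[K] (M₂ ⧸ N₂),
    ∀ (g : G') (x : M₁) (y : M₂),
      e (Submodule.Quotient.mk x) = Submodule.Quotient.mk y →
      e (Submodule.Quotient.mk (ρ₁ g x)) = Submodule.Quotient.mk (ρ₂ g y)

/-- The "multiply in pairs" map
`(Λ^{p₁} ⊗ Λ^{q₁}) ⊗ (Λ^{p₂} ⊗ Λ^{q₂}) → Λ^{p₁+p₂} ⊗ Λ^{q₁+q₂}`. -/
def pairMul (p₁ q₁ p₂ q₂ : ℕ) :
    (Lam K n p₁ ⊗[K] Lam K n q₁) ⊗[K] (Lam K n p₂ ⊗[K] Lam K n q₂) →ₗ[K]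
      Lam K n (p₁+p₂) ⊗[K] Lam K n (q₁+q₂) :=
  (TensorProduct.map (mf p₁ p₂) (mf q₁ q₂))
    ∘ₗ (TensorProduct.tensorTensorTensorComm K (Lam K n p₁) (Lam K n q₁)
        (Lam K n p₂) (Lam K n q₂)).toLinearMap

/-- The map `φ_k = (m ⊗ m) ∘ (1 ⊗ τ ⊗ 1) ∘ (Δ_{a-k,k} ⊗ Δ_{k,b-k}) : Λ^a ⊗ Λ^b → Λ^a ⊗ Λ^b`. -/
def phiSmall (a b k : ℕ) (hka : k ≤ a) (hkb : k ≤ b) :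
    Lam K n a ⊗[K] Lam K n b →ₗ[K] Lam K n a ⊗[K] Lam K n b :=
  (TensorProduct.congr (ecast K n (by omega : (a-k) + k = a))
      (ecast K n (by omega : k + (b-k) = b))).toLinearMap
    ∘ₗ pairMul K n mf (a-k) k k (b-k)
    ∘ₗ (TensorProduct.map
        ((Df (a-k) k) ∘ₗ (ecast K n (by omega : a = (a-k) + k)).toLinearMap)
        ((Df k (b-k)) ∘ₗ (ecast K n (by omega : b = k + (b-k))).toLinearMap))

/-- The map `ψ_k = C(b,k)·1 - φ_k : Λ^a ⊗ Λ^b → Λ^a ⊗ Λ^b`. -/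
def psiSmall (a b k : ℕ) (hka : k ≤ a) (hkb : k ≤ b) :
    Lam K n a ⊗[K] Lam K n b →ₗ[K] Lam K n a ⊗[K] Lam K n b :=
  (Nat.choose b k : K) • LinearMap.id - phiSmall K n mf Df a b k hka hkb

/-- The map `β_k = (m ⊗ m) ∘ (1 ⊗ τ ⊗ 1) ∘ (Δ_{a-k,k} ⊗ 1 ⊗ 1) : Λ^a ⊗ (Λ^k ⊗ Λ^{b-k}) → Λ^a ⊗ Λ^b`. -/
def betaMap (a b k : ℕ) (hka : k ≤ a) (hkb : k ≤ b) :
    Lam K n a ⊗[K] (Lam K n k ⊗[K] Lam K n (b-k)) →ₗ[K] Lam K n a ⊗[K] Lam K n b :=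
  (TensorProduct.congr (ecast K n (by omega : (a-k) + k = a))
      (ecast K n (by omega : k + (b-k) = b))).toLinearMap
    ∘ₗ pairMul K n mf (a-k) k k (b-k)
    ∘ₗ (TensorProduct.map
        ((Df (a-k) k) ∘ₗ (ecast K n (by omega : a = (a-k) + k)).toLinearMap)
        LinearMap.id)

/-- The map `γ_k : Λ^a ⊗ (Λ^k ⊗ Λ^{b-k}) → Λ^a ⊗ Λ^b`,
`γ_k(x ⊗ y ⊗ z) = x ⊗ (y ∧ z) - β_k(x ⊗ y ⊗ z)`. -/
def gammaMap (a b k : ℕ) (hka : k ≤ a) (hkb : k ≤ b) :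
    Lam K n a ⊗[K] (Lam K n k ⊗[K] Lam K n (b-k)) →ₗ[K] Lam K n a ⊗[K] Lam K n b :=
  (TensorProduct.map LinearMap.id
      ((ecast K n (by omega : k + (b-k) = b)).toLinearMap ∘ₗ mf k (b-k)))
    - betaMap K n mf Df a b k hka hkb

/-- The quantity `d_k(a,b,t)` (for the given `i`), from Lemma 5.3 of the paper. -/
def dInt (a b k i t : ℕ) : ℤ :=
  1 - ∑ j ∈ Finset.Icc (i - min (b-k) i) t,
        (-1:ℤ)^j * ((a-k+j).choose (a-k) : ℤ) * ((b-k+t-i).choose (t-j) : ℤ)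

end MMS

/-!
Composites of `δ` are governed by three facts about the exterior algebra: `m` is associative, `Δ` is
coassociative, and `m ∘ Δ_{p,q}` is multiplication by `C(p+q,p)`, the number of `(p,q)`-shuffles.
The map `δ_s` commutes with left multiplication on the first factor, so `δ_s ∘ δ_t` is determined by
`δ_s ∘ Δ_{t,b-t} = (m ⊗ 1) ∘ (Δ_{t,s} ⊗ 1) ∘ Δ_{t+s,b-t-s} = C(s+t,t) · Δ_{t+s,b-t-s}`; the maps `θ`
are treated symmetrically, with right multiplication on the second factor. Coassociativity holds
because both iterated sums over shuffles run over the permutations that are increasing on three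
consecutive blocks.
-/

namespace MMS

section Shuffles

variable {p q r : ℕ}

/-- The permutation of `Fin (p + q)` acting by `α` on the first `p` and by `β` on the last `q`
indices; the cosets of the group of block permutations are represented by the shuffles. -/
def blockPerm (α : Equiv.Perm (Fin p)) (β : Equiv.Perm (Fin q)) : Equiv.Perm (Fin (p + q)) :=
  finSumFinEquiv.permCongr (Equiv.Perm.sumCongr α β)

@[simp]
lemma blockPerm_castAdd (α : Equiv.Perm (Fin p)) (β : Equiv.Perm (Fin q)) (i : Fin p) :
    blockPerm α β (Fin.castAdd q i) = Fin.castAdd q (α i) := by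
  simp [blockPerm, Equiv.permCongr_apply]

@[simp]
lemma blockPerm_natAdd (α : Equiv.Perm (Fin p)) (β : Equiv.Perm (Fin q)) (i : Fin q) :
    blockPerm α β (Fin.natAdd p i) = Fin.natAdd p (β i) := by
  simp [blockPerm, Equiv.permCongr_apply]

@[simp]
lemma sign_blockPerm (α : Equiv.Perm (Fin p)) (β : Equiv.Perm (Fin q)) :
    Equiv.Perm.sign (blockPerm α β) = Equiv.Perm.sign α * Equiv.Perm.sign β := by
  simp [blockPerm]

lemma perm_ext_castAdd_natAdd {σ τ : Equiv.Perm (Fin (p + q))}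
    (hl : ∀ i, σ (Fin.castAdd q i) = τ (Fin.castAdd q i))
    (hr : ∀ i, σ (Fin.natAdd p i) = τ (Fin.natAdd p i)) : σ = τ :=
  Equiv.ext fun i => Fin.addCases hl hr i

lemma mul_blockPerm_comp_castAdd (π : Equiv.Perm (Fin (p + q))) (α : Equiv.Perm (Fin p))
    (β : Equiv.Perm (Fin q)) : ⇑(π * blockPerm α β) ∘ Fin.castAdd q = (π ∘ Fin.castAdd q) ∘ α := by
  funext i
  simp

lemma mul_blockPerm_comp_natAdd (π : Equiv.Perm (Fin (p + q))) (α : Equiv.Perm (Fin p))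
    (β : Equiv.Perm (Fin q)) : ⇑(π * blockPerm α β) ∘ Fin.natAdd p = (π ∘ Fin.natAdd p) ∘ β := by
  funext i
  simp

lemma mem_shuffles_iff {σ : Equiv.Perm (Fin (p + q))} :
    σ ∈ shuffles p q ↔ StrictMono (σ ∘ Fin.castAdd q) ∧ StrictMono (σ ∘ Fin.natAdd p) := by
  simp only [shuffles, Finset.mem_filter, Finset.mem_univ, true_and]
  refine and_congr ⟨fun h i j hij => h _ _ hij (by simp), fun h i j hij hj => ?_⟩
    ⟨fun h i j hij => h _ _ (by simpa using hij) (by simp), fun h i j hij hi => ?_⟩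
  · exact @h ⟨i, lt_trans hij hj⟩ ⟨j, hj⟩ hij
  · rw [← Fin.natAdd_subNat_cast hi, ← Fin.natAdd_subNat_cast (hi.trans (Fin.le_def.1 hij.le))]
    exact h (by simp [Fin.lt_def]; omega)

lemma exists_shuffle_mul_blockPerm (π : Equiv.Perm (Fin (p + q))) :
    ∃ σ ∈ shuffles p q, ∃ α β, σ * blockPerm α β = π := by
  set f : Fin p → Fin (p + q) := π ∘ Fin.castAdd q
  set g : Fin q → Fin (p + q) := π ∘ Fin.natAdd p
  have hf : Function.Injective f := π.injective.comp (Fin.castAdd_injective p q)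
  have hg : Function.Injective g := π.injective.comp (Fin.natAdd_injective q p)
  refine ⟨π * blockPerm (Tuple.sort f) (Tuple.sort g), mem_shuffles_iff.2 ⟨?_, ?_⟩,
    (Tuple.sort f)⁻¹, (Tuple.sort g)⁻¹, perm_ext_castAdd_natAdd (by simp) (by simp)⟩
  · rw [mul_blockPerm_comp_castAdd]
    exact (Tuple.monotone_sort f).strictMono_of_injective (hf.comp (Tuple.sort f).injective)
  · rw [mul_blockPerm_comp_natAdd]
    exact (Tuple.monotone_sort g).strictMono_of_injective (hg.comp (Tuple.sort g).injective)

lemma eq_of_strictMono_comp_perm_eq {γ : Type*} [PartialOrder γ] {f g : Fin p → γ}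
    (hf : StrictMono f) (hg : StrictMono g) {α β : Equiv.Perm (Fin p)} (h : f ∘ α = g ∘ β) :
    f = g ∧ α = β := by
  have hg_eq : g = f ∘ ⇑(α * β⁻¹) := by
    ext i
    simpa using (congrFun h (β⁻¹ i)).symm
  have hfg : f = g := by
    rw [hg_eq]
    exact Tuple.unique_monotone (σ := 1) hf.monotone (hg_eq ▸ hg.monotone)
  subst hfg
  exact ⟨rfl, Equiv.ext fun i => hf.injective (congrFun h i)⟩

lemma shuffle_mul_blockPerm_inj {σ σ' : Equiv.Perm (Fin (p + q))} (hσ : σ ∈ shuffles p q)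
    (hσ' : σ' ∈ shuffles p q) {α α' : Equiv.Perm (Fin p)} {β β' : Equiv.Perm (Fin q)}
    (h : σ * blockPerm α β = σ' * blockPerm α' β') : σ = σ' ∧ α = α' ∧ β = β' := by
  rw [mem_shuffles_iff] at hσ hσ'
  obtain ⟨hl, rfl⟩ := eq_of_strictMono_comp_perm_eq hσ.1 hσ'.1 (α := α) (β := α') <| by
    simpa only [mul_blockPerm_comp_castAdd]
      using congrArg (fun π : Equiv.Perm (Fin (p + q)) => π ∘ Fin.castAdd q) h
  obtain ⟨hr, rfl⟩ := eq_of_strictMono_comp_perm_eq hσ.2 hσ'.2 (α := β) (β := β') <| by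
    simpa only [mul_blockPerm_comp_natAdd]
      using congrArg (fun π : Equiv.Perm (Fin (p + q)) => π ∘ Fin.natAdd p) h
  exact ⟨perm_ext_castAdd_natAdd (congrFun hl) (congrFun hr), rfl, rfl⟩

lemma sum_perm_eq_sum_shuffles {M : Type*} [AddCommMonoid M] (F : Equiv.Perm (Fin (p + q)) → M) :
    ∑ π, F π = ∑ σ ∈ shuffles p q, ∑ α, ∑ β, F (σ * blockPerm α β) := by
  simp_rw [← Finset.sum_product']
  refine (Finset.sum_bij (fun x _ => x.1 * blockPerm x.2.1 x.2.2) (by simp) ?_ ?_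
    (fun _ _ => rfl)).symm
  · rintro ⟨σ, α, β⟩ h ⟨σ', α', β'⟩ h' heq
    obtain ⟨rfl, rfl, rfl⟩ := shuffle_mul_blockPerm_inj
      (Finset.mem_product.1 h).1 (Finset.mem_product.1 h').1 heq
    rfl
  · intro π _
    obtain ⟨σ, hσ, α, β, h⟩ := exists_shuffle_mul_blockPerm π
    exact ⟨(σ, α, β), by simpa using hσ, h⟩

lemma card_shuffles (p q : ℕ) : (shuffles p q).card = (p + q).choose p := by
  have hcard := sum_perm_eq_sum_shuffles (p := p) (q := q) fun _ => 1
  simp only [Finset.sum_const, Finset.card_univ, Fintype.card_perm, Fintype.card_fin,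
    smul_eq_mul, mul_one] at hcard
  refine Nat.eq_of_mul_eq_mul_right (by positivity : 0 < p.factorial * q.factorial) ?_
  rw [← hcard, ← mul_assoc, Nat.choose_symm_add, Nat.add_choose_mul_factorial_mul_factorial]

/-- The `(p,q,r)`-shuffles: the permutations increasing on each of three consecutive blocks of
lengths `p`, `q` and `r`. They index the terms of the iterated comultiplication. -/
def IsTripleShuffle (π : Equiv.Perm (Fin (p + q + r))) : Prop :=
  StrictMono (π ∘ Fin.castAdd r ∘ Fin.castAdd q) ∧ StrictMono (π ∘ Fin.castAdd r ∘ Fin.natAdd p) ∧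
    StrictMono (π ∘ Fin.natAdd (p + q))

lemma strictMono_perm_iff {β : Equiv.Perm (Fin q)} : StrictMono β ↔ β = 1 := by
  refine ⟨fun h => (eq_of_strictMono_comp_perm_eq strictMono_id h (β := 1) rfl).2, ?_⟩
  rintro rfl
  exact strictMono_id

lemma isTripleShuffle_mul_blockPerm_iff {σ : Equiv.Perm (Fin (p + q + r))}
    (hσ : σ ∈ shuffles (p + q) r) {α : Equiv.Perm (Fin (p + q))} {β : Equiv.Perm (Fin r)} :
    IsTripleShuffle (σ * blockPerm α β) ↔ α ∈ shuffles p q ∧ β = 1 := by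
  obtain ⟨hl, hr⟩ := mem_shuffles_iff.1 hσ
  have hl (i j) : σ (Fin.castAdd r i) < σ (Fin.castAdd r j) ↔ i < j := hl.lt_iff_lt
  have hr (i j) : σ (Fin.natAdd (p + q) i) < σ (Fin.natAdd (p + q) j) ↔ i < j := hr.lt_iff_lt
  simp [IsTripleShuffle, mem_shuffles_iff, ← strictMono_perm_iff, StrictMono, hl, hr, and_assoc]

/-- `Fin (p + (q + r))` and `Fin (p + q + r)` are different types, so the permutations of the one
are transported to the other. -/
def assocPerm : Equiv.Perm (Fin (p + (q + r))) ≃ Equiv.Perm (Fin (p + q + r)) :=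
  (finCongr (add_assoc p q r).symm).permCongr

@[simp]
lemma sign_assocPerm (π : Equiv.Perm (Fin (p + (q + r)))) :
    Equiv.Perm.sign (assocPerm π) = Equiv.Perm.sign π :=
  Equiv.Perm.sign_permCongr _ _

@[simp]
lemma assocPerm_castAdd_castAdd (π : Equiv.Perm (Fin (p + (q + r)))) (i : Fin p) :
    assocPerm π (Fin.castAdd r (Fin.castAdd q i)) =
      Fin.cast (add_assoc p q r).symm (π (Fin.castAdd (q + r) i)) :=
  rfl

@[simp]
lemma assocPerm_castAdd_natAdd (π : Equiv.Perm (Fin (p + (q + r)))) (i : Fin q) :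
    assocPerm π (Fin.castAdd r (Fin.natAdd p i)) =
      Fin.cast (add_assoc p q r).symm (π (Fin.natAdd p (Fin.castAdd r i))) :=
  rfl

@[simp]
lemma assocPerm_natAdd (π : Equiv.Perm (Fin (p + (q + r)))) (i : Fin r) :
    assocPerm π (Fin.natAdd (p + q) i) =
      Fin.cast (add_assoc p q r).symm (π (Fin.natAdd p (Fin.natAdd q i))) := by
  have : Fin.cast (add_assoc p q r) (Fin.natAdd (p + q) i) = Fin.natAdd p (Fin.natAdd q i) := by
    ext; simp [add_assoc]
  simp [assocPerm, Equiv.permCongr_apply, this]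

lemma isTripleShuffle_assocPerm_mul_blockPerm_iff {σ : Equiv.Perm (Fin (p + (q + r)))}
    (hσ : σ ∈ shuffles p (q + r)) {α : Equiv.Perm (Fin p)} {β : Equiv.Perm (Fin (q + r))} :
    IsTripleShuffle (assocPerm (σ * blockPerm α β)) ↔ α = 1 ∧ β ∈ shuffles q r := by
  obtain ⟨hl, hr⟩ := mem_shuffles_iff.1 hσ
  have hl (i j) : σ (Fin.castAdd (q + r) i) < σ (Fin.castAdd (q + r) j) ↔ i < j := hl.lt_iff_lt
  have hr (i j) : σ (Fin.natAdd p i) < σ (Fin.natAdd p j) ↔ i < j := hr.lt_iff_lt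
  simp [IsTripleShuffle, mem_shuffles_iff, ← strictMono_perm_iff, StrictMono, hl, hr]

variable {M : Type*} [AddCommMonoid M]

open scoped Classical in
lemma sum_shuffles_sum_shuffles_left (F : Equiv.Perm (Fin (p + q + r)) → M) :
    ∑ σ ∈ shuffles (p + q) r, ∑ α ∈ shuffles p q, F (σ * blockPerm α 1) =
      ∑ π with IsTripleShuffle π, F π := by
  rw [Finset.sum_filter, sum_perm_eq_sum_shuffles]
  refine Finset.sum_congr rfl fun σ hσ => ?_
  simp [isTripleShuffle_mul_blockPerm_iff hσ, ite_and, Finset.sum_ite_irrel]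

open scoped Classical in
lemma sum_shuffles_sum_shuffles_right (F : Equiv.Perm (Fin (p + q + r)) → M) :
    ∑ σ ∈ shuffles p (q + r), ∑ β ∈ shuffles q r, F (assocPerm (σ * blockPerm 1 β)) =
      ∑ π with IsTripleShuffle π, F π := by
  rw [Finset.sum_filter, ← assocPerm.sum_comp, sum_perm_eq_sum_shuffles]
  refine Finset.sum_congr rfl fun σ hσ => ?_
  simp [isTripleShuffle_assocPerm_mul_blockPerm_iff hσ, ite_and, Finset.sum_ite_irrel]

end Shuffles

section ExteriorPowers

variable {K : Type} [Field K] {n : ℕ}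

lemma linearMap_ext_wedge {p : ℕ} {M : Type*} [AddCommGroup M] [Module K M]
    {f g : Lam K n p →ₗ[K] M} (h : ∀ v, f (wedge K n v) = g (wedge K n v)) : f = g :=
  LinearMap.ext_on_range (v := exteriorPower.ιMulti K p) (exteriorPower.ιMulti_span K p (V K n)) h

lemma wedge_perm {p : ℕ} (v : Fin p → V K n) (σ : Equiv.Perm (Fin p)) :
    wedge K n (fun i => v (σ i)) = (Equiv.Perm.sign σ : ℤ) • wedge K n v :=
  (exteriorPower.ιMulti K p).map_perm v σ

lemma ecast_wedge {p q : ℕ} (h : p = q) (v : Fin p → V K n) :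
    ecast K n h (wedge K n v) = wedge K n (v ∘ Fin.cast h.symm) := by
  subst h
  rfl

@[simp]
lemma ecast_rfl {p : ℕ} (h : p = p) : ecast K n h = LinearEquiv.refl K (Lam K n p) := rfl

variable (mf : ∀ p q : ℕ, Lam K n p ⊗[K] Lam K n q →ₗ[K] Lam K n (p + q))
  (Df : ∀ p q : ℕ, Lam K n (p + q) →ₗ[K] Lam K n p ⊗[K] Lam K n q)

/-- The multiplication `Λ^p ⊗ Λ^q → Λ^k` for `p + q = k`. The degree `k` is a separate variable so
that compositions need no transport between equal degrees. -/
def mulOfEq {p q k : ℕ} (h : p + q = k) : Lam K n p ⊗[K] Lam K n q →ₗ[K] Lam K n k :=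
  (ecast K n h).toLinearMap ∘ₗ mf p q

/-- The component `Λ^k → Λ^p ⊗ Λ^q` of the comultiplication for `k = p + q`. -/
def comulOfEq {p q k : ℕ} (h : k = p + q) : Lam K n k →ₗ[K] Lam K n p ⊗[K] Lam K n q :=
  Df p q ∘ₗ (ecast K n h).toLinearMap

/-- The map `δ_t : Λ^a ⊗ Λ^b → Λ^a' ⊗ Λ^b'` for `a' = a + t` and `b' = b - t`. -/
def deltaOfEq {a b a' b' t : ℕ} (ha : a + t = a') (hb : b = t + b') :
    Lam K n a ⊗[K] Lam K n b →ₗ[K] Lam K n a' ⊗[K] Lam K n b' :=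
  (mulOfEq mf ha).rTensor _ ∘ₗ (TensorProduct.assoc K _ _ _).symm.toLinearMap ∘ₗ
    (comulOfEq Df hb).lTensor _

/-- The map `θ_t : Λ^a ⊗ Λ^b → Λ^a' ⊗ Λ^b'` for `a' = a - t` and `b' = b + t`. -/
def thetaOfEq {a b a' b' t : ℕ} (ha : a = a' + t) (hb : t + b = b') :
    Lam K n a ⊗[K] Lam K n b →ₗ[K] Lam K n a' ⊗[K] Lam K n b' :=
  (mulOfEq mf hb).lTensor _ ∘ₗ (TensorProduct.assoc K _ _ _).toLinearMap ∘ₗ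
    (comulOfEq Df ha).rTensor _

lemma deltaMap_eq_deltaOfEq {a b t : ℕ} (ht : t ≤ b) :
    deltaMap K n mf Df a b t ht = deltaOfEq mf Df rfl (by omega : b = t + (b - t)) :=
  rfl

lemma thetaMap_eq_thetaOfEq {a b t : ℕ} (ht : t ≤ a) :
    thetaMap K n mf Df a b t ht = thetaOfEq mf Df (by omega : a = a - t + t) (add_comm t b) :=
  rfl

lemma congr_ecast_comp_deltaOfEq {a b a' b' a'' b'' t : ℕ} (ha : a + t = a') (hb : b = t + b')
    (ha' : a' = a'') (hb' : b' = b'') :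
    (TensorProduct.congr (ecast K n ha') (ecast K n hb')).toLinearMap ∘ₗ deltaOfEq mf Df ha hb =
      deltaOfEq mf Df (by omega : a + t = a'') (by omega) := by
  subst ha' hb'
  simp

lemma congr_ecast_comp_thetaOfEq {a b a' b' a'' b'' t : ℕ} (ha : a = a' + t) (hb : t + b = b')
    (ha' : a' = a'') (hb' : b' = b'') :
    (TensorProduct.congr (ecast K n ha') (ecast K n hb')).toLinearMap ∘ₗ thetaOfEq mf Df ha hb =
      thetaOfEq mf Df (by omega : a = a'' + t) (by omega) := by
  subst ha' hb'
  simp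

/-- Left multiplication by `x ∈ Λ^p`, as a map `Λ^q → Λ^k` for `p + q = k`. -/
def mulLeft {p q k : ℕ} (h : p + q = k) (x : Lam K n p) : Lam K n q →ₗ[K] Lam K n k :=
  TensorProduct.curry (mulOfEq mf h) x

/-- Right multiplication by `y ∈ Λ^q`, as a map `Λ^p → Λ^k` for `p + q = k`. -/
def mulRight {p q k : ℕ} (h : p + q = k) (y : Lam K n q) : Lam K n p →ₗ[K] Lam K n k :=
  (TensorProduct.curry (mulOfEq mf h)).flip y

lemma deltaOfEq_tmul {a b a' b' t : ℕ} (ha : a + t = a') (hb : b = t + b') (x : Lam K n a)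
    (y : Lam K n b) :
    deltaOfEq mf Df ha hb (x ⊗ₜ y) = (mulLeft mf ha x).rTensor _ (comulOfEq Df hb y) := by
  have : (mulOfEq mf ha).rTensor (Lam K n b') ∘ₗ (TensorProduct.assoc K _ _ _).symm.toLinearMap ∘ₗ
      TensorProduct.mk K _ _ x = (mulLeft mf ha x).rTensor _ := TensorProduct.ext' fun _ _ => rfl
  exact LinearMap.congr_fun this _

lemma thetaOfEq_tmul {a b a' b' t : ℕ} (ha : a = a' + t) (hb : t + b = b') (x : Lam K n a)
    (y : Lam K n b) :
    thetaOfEq mf Df ha hb (x ⊗ₜ y) = (mulRight mf hb y).lTensor _ (comulOfEq Df ha x) := by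
  have : (mulOfEq mf hb).lTensor (Lam K n a') ∘ₗ (TensorProduct.assoc K _ _ _).toLinearMap ∘ₗ
      (TensorProduct.mk K _ _).flip y = (mulRight mf hb y).lTensor _ :=
    TensorProduct.ext' fun _ _ => rfl
  exact LinearMap.congr_fun this _

variable {mf Df}

lemma mulOfEq_assoc (hmf : ∀ p q, IsMulMap K n p q (mf p q)) {p q r i j k : ℕ}
    (hpq : p + q = i) (hir : i + r = k) (hqr : q + r = j) (hpj : p + j = k) :
    mulOfEq mf hir ∘ₗ (mulOfEq mf hpq).rTensor _ =
      mulOfEq mf hpj ∘ₗ (mulOfEq mf hqr).lTensor _ ∘ₗ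
        (TensorProduct.assoc K _ _ _).toLinearMap := by
  subst hpq hqr hir
  refine TensorProduct.ext <| TensorProduct.ext <| linearMap_ext_wedge fun u =>
    linearMap_ext_wedge fun v => linearMap_ext_wedge fun w => ?_
  simp [mulOfEq, hmf _ _ _ _, ecast_wedge, Fin.append_assoc]

lemma comulOfEq_coassoc (hDf : ∀ p q, IsComulMap K n p q (Df p q)) {p q r i j k : ℕ}
    (hpq : i = p + q) (hir : k = i + r) (hqr : j = q + r) (hpj : k = p + j) :
    (TensorProduct.assoc K _ _ _).toLinearMap ∘ₗ
        (comulOfEq Df hpq).rTensor _ ∘ₗ comulOfEq Df hir =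
      (comulOfEq Df hqr).lTensor _ ∘ₗ comulOfEq Df hpj := by
  subst hpq hqr hir
  refine linearMap_ext_wedge fun v => ?_
  let term (π : Equiv.Perm (Fin (p + q + r))) : Lam K n p ⊗[K] (Lam K n q ⊗[K] Lam K n r) :=
    (Equiv.Perm.sign π : ℤ) • wedge K n (fun i => v (π (Fin.castAdd r (Fin.castAdd q i)))) ⊗ₜ[K]
      (wedge K n (fun i => v (π (Fin.castAdd r (Fin.natAdd p i)))) ⊗ₜ[K]
        wedge K n fun i => v (π (Fin.natAdd (p + q) i)))
  calc
    _ = ∑ σ ∈ shuffles (p + q) r, ∑ α ∈ shuffles p q, term (σ * blockPerm α 1) := by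
      simp [term, comulOfEq, hDf _ _ _, TensorProduct.sum_tmul, Finset.smul_sum, mul_smul,
        ← TensorProduct.smul_tmul', ← Int.cast_smul_eq_zsmul K]
    _ = ∑ σ ∈ shuffles p (q + r), ∑ β ∈ shuffles q r, term (assocPerm (σ * blockPerm 1 β)) :=
      (sum_shuffles_sum_shuffles_left term).trans (sum_shuffles_sum_shuffles_right term).symm
    _ = _ := by
      simp [term, comulOfEq, ecast_wedge, hDf _ _ _, TensorProduct.tmul_sum, Finset.smul_sum,
        mul_smul]

lemma mulOfEq_comp_comulOfEq (hmf : ∀ p q, IsMulMap K n p q (mf p q))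
    (hDf : ∀ p q, IsComulMap K n p q (Df p q)) {p q k : ℕ} (h : k = p + q) :
    mulOfEq mf h.symm ∘ₗ comulOfEq Df h = (k.choose p : K) • LinearMap.id := by
  subst h
  refine linearMap_ext_wedge fun v => ?_
  have hterm (σ : Equiv.Perm (Fin (p + q))) :
      (Equiv.Perm.sign σ : ℤ) • wedge K n (Fin.append (fun i => v (σ (Fin.castAdd q i)))
        fun i => v (σ (Fin.natAdd p i))) = wedge K n v := by
    rw [Fin.append_castAdd_natAdd (f := fun i => v (σ i)), wedge_perm, smul_smul,
      Int.units_coe_mul_self, one_smul]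
  simp [comulOfEq, mulOfEq, hDf _ _ _, hmf _ _ _ _, hterm, card_shuffles, Nat.cast_smul_eq_nsmul]

lemma mulLeft_mulOfEq (hmf : ∀ p q, IsMulMap K n p q (mf p q)) {p q r i j k : ℕ}
    (hpq : p + q = i) (hir : i + r = k) (hqr : q + r = j) (hpj : p + j = k)
    (x : Lam K n p) (y : Lam K n q) :
    mulLeft mf hir (mulOfEq mf hpq (x ⊗ₜ y)) = mulLeft mf hpj x ∘ₗ mulLeft mf hqr y :=
  LinearMap.ext fun z => LinearMap.congr_fun (mulOfEq_assoc hmf hpq hir hqr hpj) (x ⊗ₜ y ⊗ₜ z)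

lemma mulRight_mulOfEq (hmf : ∀ p q, IsMulMap K n p q (mf p q)) {p q r i j k : ℕ}
    (hpq : p + q = i) (hir : i + r = k) (hqr : q + r = j) (hpj : p + j = k)
    (y : Lam K n q) (z : Lam K n r) :
    mulRight mf hpj (mulOfEq mf hqr (y ⊗ₜ z)) = mulRight mf hir z ∘ₗ mulRight mf hpq y :=
  LinearMap.ext fun x =>
    (LinearMap.congr_fun (mulOfEq_assoc hmf hpq hir hqr hpj) (x ⊗ₜ y ⊗ₜ z)).symm

lemma deltaOfEq_comp_rTensor_mulLeft (hmf : ∀ p q, IsMulMap K n p q (mf p q))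
    {p a b a' b' k k' t : ℕ} (ha : a + t = a') (hb : b = t + b') (hk : p + a = k)
    (hk' : p + a' = k') (x : Lam K n p) :
    deltaOfEq mf Df (by omega : k + t = k') hb ∘ₗ (mulLeft mf hk x).rTensor _ =
      (mulLeft mf hk' x).rTensor _ ∘ₗ deltaOfEq mf Df ha hb := by
  refine TensorProduct.ext' fun y z => ?_
  change deltaOfEq mf Df _ hb (mulOfEq mf hk (x ⊗ₜ y) ⊗ₜ z) = _
  rw [LinearMap.comp_apply, deltaOfEq_tmul, deltaOfEq_tmul, mulLeft_mulOfEq hmf hk _ ha hk',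
    LinearMap.rTensor_comp_apply]

lemma thetaOfEq_comp_lTensor_mulRight (hmf : ∀ p q, IsMulMap K n p q (mf p q))
    {p a b a' b' k k' t : ℕ} (ha : a = a' + t) (hb : t + b = b') (hk : b + p = k)
    (hk' : b' + p = k') (z : Lam K n p) :
    thetaOfEq mf Df ha (by omega : t + k = k') ∘ₗ (mulRight mf hk z).lTensor _ =
      (mulRight mf hk' z).lTensor _ ∘ₗ thetaOfEq mf Df ha hb := by
  refine TensorProduct.ext' fun x y => ?_
  change thetaOfEq mf Df ha _ (x ⊗ₜ mulOfEq mf hk (y ⊗ₜ z)) = _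
  rw [LinearMap.comp_apply, thetaOfEq_tmul, thetaOfEq_tmul, mulRight_mulOfEq hmf hb hk' hk _,
    LinearMap.lTensor_comp_apply]

lemma deltaOfEq_comp_comulOfEq (hmf : ∀ p q, IsMulMap K n p q (mf p q))
    (hDf : ∀ p q, IsComulMap K n p q (Df p q)) {k b b' s t u : ℕ} (hk : k = t + b)
    (hb : b = s + b') (hu : t + s = u) :
    deltaOfEq mf Df hu hb ∘ₗ comulOfEq Df hk =
      (u.choose t : K) • comulOfEq Df (by omega : k = u + b') := by
  have hcoassoc := comulOfEq_coassoc hDf hu.symm (by omega : k = u + b') hb hk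
  rw [deltaOfEq, LinearMap.comp_assoc, LinearMap.comp_assoc, ← hcoassoc,
    ← LinearMap.comp_assoc _ _ (LinearEquiv.toLinearMap _), LinearEquiv.symm_comp,
    LinearMap.id_comp, ← LinearMap.comp_assoc, ← LinearMap.rTensor_comp,
    mulOfEq_comp_comulOfEq hmf hDf, LinearMap.rTensor_smul, LinearMap.rTensor_id,
    LinearMap.smul_comp, LinearMap.id_comp]

lemma thetaOfEq_comp_comulOfEq (hmf : ∀ p q, IsMulMap K n p q (mf p q))
    (hDf : ∀ p q, IsComulMap K n p q (Df p q)) {k a a' s t u : ℕ} (hk : k = a + t)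
    (ha : a = a' + s) (hu : s + t = u) :
    thetaOfEq mf Df ha hu ∘ₗ comulOfEq Df hk =
      (u.choose s : K) • comulOfEq Df (by omega : k = a' + u) := by
  have hcoassoc := comulOfEq_coassoc hDf ha hk hu.symm (by omega : k = a' + u)
  rw [thetaOfEq, LinearMap.comp_assoc, LinearMap.comp_assoc, hcoassoc, ← LinearMap.comp_assoc,
    ← LinearMap.lTensor_comp, mulOfEq_comp_comulOfEq hmf hDf, LinearMap.lTensor_smul,
    LinearMap.lTensor_id, LinearMap.smul_comp, LinearMap.id_comp]

theorem deltaOfEq_comp_deltaOfEq (hmf : ∀ p q, IsMulMap K n p q (mf p q))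
    (hDf : ∀ p q, IsComulMap K n p q (Df p q)) {a b a' b' a'' b'' s t u : ℕ}
    (ha : a + t = a') (hb : b = t + b') (ha' : a' + s = a'') (hb' : b' = s + b'')
    (hu : t + s = u) :
    deltaOfEq mf Df ha' hb' ∘ₗ deltaOfEq mf Df ha hb =
      (u.choose t : K) • deltaOfEq mf Df (by omega : a + u = a'') (by omega : b = u + b'') := by
  refine TensorProduct.ext' fun x y => ?_
  have hlinear := LinearMap.congr_fun
    (deltaOfEq_comp_rTensor_mulLeft (Df := Df) hmf hu hb' ha (by omega : a + u = a'') x)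
    (comulOfEq Df hb y)
  have hcomul := LinearMap.congr_fun (deltaOfEq_comp_comulOfEq hmf hDf hb hb' hu) y
  simp only [LinearMap.comp_apply, LinearMap.smul_apply] at hlinear hcomul ⊢
  rw [deltaOfEq_tmul, hlinear, hcomul, map_smul, deltaOfEq_tmul]

theorem thetaOfEq_comp_thetaOfEq (hmf : ∀ p q, IsMulMap K n p q (mf p q))
    (hDf : ∀ p q, IsComulMap K n p q (Df p q)) {a b a' b' a'' b'' s t u : ℕ}
    (ha : a = a' + t) (hb : t + b = b') (ha' : a' = a'' + s) (hb' : s + b' = b'')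
    (hu : s + t = u) :
    thetaOfEq mf Df ha' hb' ∘ₗ thetaOfEq mf Df ha hb =
      (u.choose s : K) • thetaOfEq mf Df (by omega : a = a'' + u) (by omega : u + b = b'') := by
  refine TensorProduct.ext' fun x y => ?_
  have hlinear := LinearMap.congr_fun
    (thetaOfEq_comp_lTensor_mulRight (Df := Df) hmf ha' hu hb (by omega : u + b = b'') y)
    (comulOfEq Df ha x)
  have hcomul := LinearMap.congr_fun (thetaOfEq_comp_comulOfEq hmf hDf ha ha' hu) x
  simp only [LinearMap.comp_apply, LinearMap.smul_apply] at hlinear hcomul ⊢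
  rw [thetaOfEq_tmul, hlinear, hcomul, map_smul, thetaOfEq_tmul]

end ExteriorPowers

theorem statement5_general (K : Type) [Field K] (n a b t s : ℕ)
    (mf : ∀ p q : ℕ, Lam K n p ⊗[K] Lam K n q →ₗ[K] Lam K n (p + q))
    (Df : ∀ p q : ℕ, Lam K n (p + q) →ₗ[K] Lam K n p ⊗[K] Lam K n q)
    (hmf : ∀ p q, IsMulMap K n p q (mf p q))
    (hDf : ∀ p q, IsComulMap K n p q (Df p q)) :
    (∀ h : s + t ≤ b,
      deltaMap K n mf Df (a + t) (b - t) s (by omega) ∘ₗ deltaMap K n mf Df a b t (by omega) =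
        ((s + t).choose t : K) •
          ((TensorProduct.congr (ecast K n (by omega : a + (s + t) = a + t + s))
              (ecast K n (by omega : b - (s + t) = b - t - s))).toLinearMap
            ∘ₗ deltaMap K n mf Df a b (s + t) h)) ∧
    (∀ h : s + t ≤ a,
      thetaMap K n mf Df (a - t) (b + t) s (by omega) ∘ₗ thetaMap K n mf Df a b t (by omega) =
        ((s + t).choose t : K) •
          ((TensorProduct.congr (ecast K n (by omega : a - (s + t) = a - t - s))
              (ecast K n (by omega : b + (s + t) = b + t + s))).toLinearMap
            ∘ₗ thetaMap K n mf Df a b (s + t) h)) := by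
  simp only [deltaMap_eq_deltaOfEq, thetaMap_eq_thetaOfEq, congr_ecast_comp_deltaOfEq,
    congr_ecast_comp_thetaOfEq]
  refine ⟨fun _ => deltaOfEq_comp_deltaOfEq hmf hDf _ _ _ _ (add_comm t s), fun _ => ?_⟩
  rw [← Nat.choose_symm_add]
  exact thetaOfEq_comp_thetaOfEq hmf hDf _ _ _ _ rfl

/-- `δ_s ∘ δ_t = C(s+t,t)·δ_{s+t}` (for `s+t ≤ b`) and `θ_s ∘ θ_t = C(s+t,t)·θ_{s+t}`
(for `s+t ≤ a`), as maps defined on `Λ^a ⊗ Λ^b`. -/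
theorem statement5 (K : Type) [Field K] [CharZero K] (n : ℕ) (a b s t : ℕ)
    (mf : ∀ p q : ℕ, Lam K n p ⊗[K] Lam K n q →ₗ[K] Lam K n (p+q))
    (Df : ∀ p q : ℕ, Lam K n (p+q) →ₗ[K] Lam K n p ⊗[K] Lam K n q)
    (hmf : ∀ p q, IsMulMap K n p q (mf p q))
    (hDf : ∀ p q, IsComulMap K n p q (Df p q)) :
    (∀ h : s + t ≤ b,
      deltaMap K n mf Df (a+t) (b-t) s (by omega) ∘ₗ deltaMap K n mf Df a b t (by omega) =
        ((s+t).choose t : K) •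
          ((TensorProduct.congr (ecast K n (by omega : a+(s+t) = (a+t)+s))
              (ecast K n (by omega : b-(s+t) = (b-t)-s))).toLinearMap
            ∘ₗ deltaMap K n mf Df a b (s+t) h)) ∧
    (∀ h : s + t ≤ a,
      thetaMap K n mf Df (a-t) (b+t) s (by omega) ∘ₗ thetaMap K n mf Df a b t (by omega) =
        ((s+t).choose t : K) •
          ((TensorProduct.congr (ecast K n (by omega : a-(s+t) = (a-t)-s))
              (ecast K n (by omega : b+(s+t) = (b+t)+s))).toLinearMap
            ∘ₗ thetaMap K n mf Df a b (s+t) h)) :=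
  statement5_general K n a b t s mf Df hmf hDf

end MMS
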